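/- Let T be a tournament of order n ≥ 3. If there exists a vertex u of T with d⁻(u)=0, then 2 ≤ γ_oso(T) ≤ ⌈log₂(n−1)⌉ + 1. -/

import Mathlib

/-!
A vertex `u` of in-degree `0` lies in every out-dominating set. It cannot be swapped out,
since the set obtained would no longer dominate `u`; hence `{u}` alone is not secure and
`γ_oso ≥ 2`.

For the upper bound, let `D` be an out-dominating set of `T - u`. Then `{u} ∪ D` is an OSODS:
a vertex `v` outside it has an in-neighbour `d ∈ D`, and exchanging `d` for `v` keeps `u`, which
by itself dominates everything. A small `D` is produced greedily, in any semicomplete digraph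
(any two distinct vertices joined by at least one arc). There the non-arcs `w ≠ v ∧ ¬ A v w` form
an asymmetric relation, so counting its pairs in a set `W` of vertices from both ends gives some
`v ∈ W` that fails to dominate fewer than `|W| / 2` elements of `W`; put `v` into `D` and continue
with these. This yields `2 ^ |D| ≤ |W| + 1`, and with `|W| = n - 1 ≥ 2` it follows that
`|D| ≤ ⌈log₂ (n - 1)⌉`.
-/

open Finset

variable {V : Type*}

/-- `S` is an out-dominating set of the digraph with arc relation `A`. -/
def OutDom (A : V → V → Prop) (S : Finset V) : Prop :=
  ∀ v : V, v ∉ S → ∃ u ∈ S, A u v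

/-- `S` is an in-dominating set. -/
def InDom (A : V → V → Prop) (S : Finset V) : Prop :=
  ∀ v : V, v ∉ S → ∃ u ∈ S, A v u

/-- `S` is a dominating set of the underlying undirected graph of the digraph `A`. -/
def DomG (A : V → V → Prop) (S : Finset V) : Prop :=
  ∀ v : V, v ∉ S → ∃ u ∈ S, A u v ∨ A v u

/-- Secure dominating set of the underlying undirected graph. -/
def SDS [DecidableEq V] (A : V → V → Prop) (S : Finset V) : Prop :=
  DomG A S ∧ ∀ v : V, v ∉ S → ∃ u ∈ S, (A u v ∨ A v u) ∧ DomG A (insert v (S.erase u))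

/-- Out-secure dominating set (OSDS). -/
def OSDS [DecidableEq V] (A : V → V → Prop) (S : Finset V) : Prop :=
  DomG A S ∧ ∀ v : V, v ∉ S → ∃ u ∈ S, A u v ∧ DomG A (insert v (S.erase u))

/-- Secure out-dominating set (SODS). -/
def SODS [DecidableEq V] (A : V → V → Prop) (S : Finset V) : Prop :=
  OutDom A S ∧ ∀ v : V, v ∉ S → ∃ u ∈ S, (A v u ∨ A u v) ∧ OutDom A (insert v (S.erase u))

/-- Out-secure out-dominating set (OSODS). -/
def OSODS [DecidableEq V] (A : V → V → Prop) (S : Finset V) : Prop :=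
  OutDom A S ∧ ∀ v : V, v ∉ S → ∃ u ∈ S, A u v ∧ OutDom A (insert v (S.erase u))

/-- In-secure out-dominating set (ISODS). -/
def ISODS [DecidableEq V] (A : V → V → Prop) (S : Finset V) : Prop :=
  OutDom A S ∧ ∀ v : V, v ∉ S → ∃ u ∈ S, A v u ∧ OutDom A (insert v (S.erase u))

/-- Twin dominating set. -/
def TwinDom (A : V → V → Prop) (S : Finset V) : Prop :=
  ∀ v : V, v ∉ S → (∃ u ∈ S, A v u) ∧ (∃ u ∈ S, A u v)

/-- The out-domination number `γ⁺`. -/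
noncomputable def gammaPlus [Fintype V] (A : V → V → Prop) : ℕ :=
  sInf {k | ∃ S : Finset V, OutDom A S ∧ S.card = k}

/-- The in-domination number `γ⁻`. -/
noncomputable def gammaMinus [Fintype V] (A : V → V → Prop) : ℕ :=
  sInf {k | ∃ S : Finset V, InDom A S ∧ S.card = k}

/-- The secure domination number of the underlying undirected graph, `γ_s`. -/
noncomputable def gammaS [Fintype V] [DecidableEq V] (A : V → V → Prop) : ℕ :=
  sInf {k | ∃ S : Finset V, SDS A S ∧ S.card = k}

/-- The out-secure domination number `γ_os`. -/
noncomputable def gammaOS [Fintype V] [DecidableEq V] (A : V → V → Prop) : ℕ :=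
  sInf {k | ∃ S : Finset V, OSDS A S ∧ S.card = k}

/-- The secure out-domination number `γ_so`. -/
noncomputable def gammaSO [Fintype V] [DecidableEq V] (A : V → V → Prop) : ℕ :=
  sInf {k | ∃ S : Finset V, SODS A S ∧ S.card = k}

/-- The out-secure out-domination number `γ_oso`. -/
noncomputable def gammaOSO [Fintype V] [DecidableEq V] (A : V → V → Prop) : ℕ :=
  sInf {k | ∃ S : Finset V, OSODS A S ∧ S.card = k}

/-- The in-secure out-domination number `γ_iso`. -/
noncomputable def gammaISO [Fintype V] [DecidableEq V] (A : V → V → Prop) : ℕ :=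
  sInf {k | ∃ S : Finset V, ISODS A S ∧ S.card = k}

/-- The twin domination number `γ*`. -/
noncomputable def gammaTwin [Fintype V] (A : V → V → Prop) : ℕ :=
  sInf {k | ∃ S : Finset V, TwinDom A S ∧ S.card = k}

/-- Out-degree `d⁺(u)`. -/
noncomputable def outDeg (A : V → V → Prop) (u : V) : ℕ := Nat.card {v | A u v}

/-- In-degree `d⁻(u)`. -/
noncomputable def inDeg (A : V → V → Prop) (u : V) : ℕ := Nat.card {v | A v u}

/-- Maximum out-degree `Δ⁺`. -/
noncomputable def maxOutDeg [Fintype V] (A : V → V → Prop) : ℕ :=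
  Finset.univ.sup fun u => outDeg A u

/-- Minimum out-degree `δ⁺`. -/
noncomputable def minOutDeg (A : V → V → Prop) : ℕ := sInf (Set.range fun u => outDeg A u)

/-- Minimum in-degree `δ⁻`. -/
noncomputable def minInDeg (A : V → V → Prop) : ℕ := sInf (Set.range fun u => inDeg A u)

/-- The set of out-private neighbors `pn⁺(u,S)`: vertices `w` with `N⁻[w] ∩ S = {u}`. -/
def pnPlus (A : V → V → Prop) (S : Finset V) (u : V) : Set V :=
  {w | {x | A x w ∨ x = w} ∩ ↑S = {u}}

/-- The set of in-private neighbors `pn⁻(u,S)`: vertices `w` with `N⁺[w] ∩ S = {u}`. -/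
def pnMinus (A : V → V → Prop) (S : Finset V) (u : V) : Set V :=
  {w | {x | A w x ∨ x = w} ∩ ↑S = {u}}

/-- `A` is an orientation of the simple graph `G`. -/
def IsOrientation (G : SimpleGraph V) (A : V → V → Prop) : Prop :=
  (∀ u v : V, G.Adj u v ↔ (A u v ∨ A v u)) ∧ (∀ u v : V, A u v → ¬ A v u)

/-- The arc relation of the directed path `P_n` on `Fin n`. -/
def pathArc (n : ℕ) : Fin n → Fin n → Prop := fun i j => (i : ℕ) + 1 = (j : ℕ)

/-- The arc relation of the directed cycle `C_n` on `Fin n`. -/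
def cycleArc (n : ℕ) : Fin n → Fin n → Prop := fun i j => ((i : ℕ) + 1) % n = (j : ℕ)

section Source

variable {A : V → V → Prop} {u : V}

lemma inDeg_eq_zero_iff [Finite V] : inDeg A u = 0 ↔ ∀ v, ¬ A v u := by
  rw [inDeg, Nat.card_coe_set_eq, Set.ncard_eq_zero, Set.eq_empty_iff_forall_notMem]
  rfl

lemma OutDom.mem_of_forall_not_arc {S : Finset V} (hS : OutDom A S) (hu : ∀ v, ¬ A v u) :
    u ∈ S := by
  by_contra huS
  obtain ⟨w, -, hwu⟩ := hS u huS
  exact hu w hwu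

lemma outDom_of_mem {S : Finset V} (hu : ∀ v, v ≠ u → A u v) (huS : u ∈ S) : OutDom A S :=
  fun v hv => ⟨u, huS, hu v (ne_of_mem_of_not_mem huS hv).symm⟩

lemma OSODS.one_lt_card [DecidableEq V] [Nontrivial V] {S : Finset V} (hS : OSODS A S)
    (hu : ∀ v, ¬ A v u) : 1 < #S := by
  have huS : u ∈ S := hS.1.mem_of_forall_not_arc hu
  obtain ⟨v, hvu⟩ := exists_ne u
  by_cases hvS : v ∈ S
  · exact Finset.one_lt_card.2 ⟨v, hvS, u, huS, hvu⟩
  · obtain ⟨w, hwS, -, hswap⟩ := hS.2 v hvS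
    have hu_swap : u ∈ insert v (S.erase w) := hswap.mem_of_forall_not_arc hu
    have huw : u ≠ w := ne_of_mem_erase (mem_of_mem_insert_of_ne hu_swap hvu.symm)
    exact Finset.one_lt_card.2 ⟨u, huS, w, hwS, huw⟩

lemma osods_insert [DecidableEq V] {D : Finset V} (hu : ∀ v, v ≠ u → A u v) (huD : u ∉ D)
    (hD : ∀ v, v ≠ u → v ∉ D → ∃ d ∈ D, A d v) : OSODS A (insert u D) := by
  refine ⟨outDom_of_mem hu (mem_insert_self u D), fun v hv => ?_⟩
  rw [mem_insert, not_or] at hv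
  obtain ⟨d, hdD, hdv⟩ := hD v hv.1 hv.2
  have hu_keep : u ∈ (insert u D).erase d :=
    mem_erase.2 ⟨(ne_of_mem_of_not_mem hdD huD).symm, mem_insert_self u D⟩
  exact ⟨d, mem_insert_of_mem hdD, hdv, outDom_of_mem hu (mem_insert_of_mem hu_keep)⟩

lemma osods_univ [Fintype V] [DecidableEq V] : OSODS A univ :=
  ⟨fun v hv => absurd (mem_univ v) hv, fun v hv => absurd (mem_univ v) hv⟩

lemma gammaOSO_le_card [Fintype V] [DecidableEq V] {S : Finset V} (hS : OSODS A S) :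
    gammaOSO A ≤ #S :=
  Nat.sInf_le ⟨S, hS, rfl⟩

lemma two_le_gammaOSO [Fintype V] [DecidableEq V] [Nontrivial V] (hu : ∀ v, ¬ A v u) :
    2 ≤ gammaOSO A := by
  refine le_csInf ⟨_, univ, osods_univ, rfl⟩ ?_
  rintro _ ⟨S, hS, rfl⟩
  exact hS.one_lt_card hu

end Source

section Greedy

lemma card_filter_add_card_filter_lt_of_asymm (R : V → V → Prop) [DecidableRel R] [Std.Asymm R]
    {W : Finset V} {v : V} (hv : v ∈ W) :
    #{w ∈ W | R w v} + #{w ∈ W | R v w} < #W := by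
  classical
  have hdisj : Disjoint {w ∈ W | R w v} {w ∈ W | R v w} :=
    disjoint_filter.2 fun w _ hwv => Std.Asymm.asymm w v hwv
  rw [← card_union_of_disjoint hdisj, ← filter_or]
  exact card_lt_card (filter_ssubset.2 ⟨v, hv, by simp [irrefl_of R v]⟩)

lemma exists_two_mul_card_filter_lt_of_asymm (R : V → V → Prop) [DecidableRel R] [Std.Asymm R]
    {W : Finset V} (hW : W.Nonempty) : ∃ v ∈ W, 2 * #{w ∈ W | R w v} < #W := by
  have hsum : ∑ v ∈ W, #{w ∈ W | R w v} ≤ ∑ v ∈ W, #{w ∈ W | R v w} :=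
    (sum_card_bipartiteAbove_eq_sum_card_bipartiteBelow R).ge
  obtain ⟨v, hv, hle⟩ := exists_le_of_sum_le hW hsum
  have hlt := card_filter_add_card_filter_lt_of_asymm R hv
  exact ⟨v, hv, by omega⟩

lemma exists_two_mul_card_undominated_lt [DecidableEq V] (A : V → V → Prop) [DecidableRel A]
    [Std.Trichotomous A] {W : Finset V} (hW : W.Nonempty) :
    ∃ v ∈ W, 2 * #{w ∈ W | w ≠ v ∧ ¬ A v w} < #W := by
  have : Std.Asymm fun w v => w ≠ v ∧ ¬ A v w :=
    ⟨fun w v hwv hvw => hwv.1 (Std.Trichotomous.trichotomous w v hvw.2 hwv.2)⟩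
  exact exists_two_mul_card_filter_lt_of_asymm (fun w v => w ≠ v ∧ ¬ A v w) hW

lemma exists_dominating_subset_two_pow_card_le (A : V → V → Prop) [Std.Trichotomous A]
    (W : Finset V) :
    ∃ D ⊆ W, (∀ w ∈ W, w ∉ D → ∃ d ∈ D, A d w) ∧ 2 ^ #D ≤ #W + 1 := by
  classical
  induction W using Finset.strongInduction with
  | H W ih =>
    rcases W.eq_empty_or_nonempty with rfl | hW
    · exact ⟨∅, by simp⟩
    obtain ⟨v, hv, hcard⟩ := exists_two_mul_card_undominated_lt A hW
    have hssub : {w ∈ W | w ≠ v ∧ ¬ A v w} ⊂ W := filter_ssubset.2 ⟨v, hv, by simp⟩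
    obtain ⟨D, hDsub, hDdom, hDcard⟩ := ih _ hssub
    refine ⟨insert v D, insert_subset hv (hDsub.trans hssub.subset), fun w hw hwD => ?_, ?_⟩
    · rw [mem_insert, not_or] at hwD
      by_cases hvw : A v w
      · exact ⟨v, mem_insert_self v D, hvw⟩
      · obtain ⟨d, hd, hdw⟩ := hDdom w (mem_filter.2 ⟨hw, hwD.1, hvw⟩) hwD.2
        exact ⟨d, mem_insert_of_mem hd, hdw⟩
    · calc 2 ^ #(insert v D) ≤ 2 ^ (#D + 1) :=
            Nat.pow_le_pow_right two_pos (card_insert_le v D)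
        _ = 2 * 2 ^ #D := pow_succ' 2 #D
        _ ≤ #W + 1 := by omega

end Greedy

lemma le_clog_two_of_two_pow_le_succ {k m : ℕ} (hm : 2 ≤ m) (hk : 2 ^ k ≤ m + 1) :
    k ≤ Nat.clog 2 m := by
  have hlt : 2 ^ k < 2 ^ (Nat.clog 2 m + 1) :=
    calc 2 ^ k ≤ m + 1 := hk
      _ < 2 * m := by omega
      _ ≤ 2 * 2 ^ Nat.clog 2 m := Nat.mul_le_mul_left 2 (Nat.le_pow_clog one_lt_two m)
      _ = 2 ^ (Nat.clog 2 m + 1) := (pow_succ' 2 _).symm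
  exact Nat.lt_succ_iff.1 ((Nat.pow_lt_pow_iff_right one_lt_two).1 hlt)

lemma gammaOSO_le_clog_add_one [Fintype V] [DecidableEq V] (A : V → V → Prop)
    [Std.Trichotomous A] (hn : 3 ≤ Fintype.card V) {u : V} (hu : ∀ v, v ≠ u → A u v) :
    gammaOSO A ≤ Nat.clog 2 (Fintype.card V - 1) + 1 := by
  obtain ⟨D, hDsub, hDdom, hDcard⟩ :=
    exists_dominating_subset_two_pow_card_le A (univ.erase u)
  rw [card_erase_of_mem (mem_univ u), card_univ] at hDcard
  have huD : u ∉ D := fun h => notMem_erase u univ (hDsub h)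
  have hS : OSODS A (insert u D) :=
    osods_insert hu huD fun v hv => hDdom v (mem_erase.2 ⟨hv, mem_univ v⟩)
  calc gammaOSO A ≤ #(insert u D) := gammaOSO_le_card hS
    _ = #D + 1 := card_insert_of_notMem huD
    _ ≤ Nat.clog 2 (Fintype.card V - 1) + 1 :=
        Nat.add_le_add_right (le_clog_two_of_two_pow_le_succ (by omega) hDcard) 1

theorem stmt_9_general [Fintype V] [DecidableEq V] (A : V → V → Prop) [Std.Trichotomous A]
    (hn : 3 ≤ Fintype.card V) (hu : ∃ u : V, inDeg A u = 0) :
    2 ≤ gammaOSO A ∧ gammaOSO A ≤ Nat.clog 2 (Fintype.card V - 1) + 1 := by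
  obtain ⟨u, hu⟩ := hu
  have hin : ∀ v, ¬ A v u := inDeg_eq_zero_iff.1 hu
  have hout : ∀ v, v ≠ u → A u v := fun v hvu =>
    by_contra fun h => hvu (Std.Trichotomous.trichotomous v u (hin v) h)
  have : Nontrivial V := Fintype.one_lt_card_iff_nontrivial.1 (by omega)
  exact ⟨two_le_gammaOSO hin, gammaOSO_le_clog_add_one A hn hout⟩

/-- for a tournament of order `n ≥ 3` having a vertex of in-degree `0`,
`2 ≤ γ_oso(T) ≤ ⌈log₂(n−1)⌉ + 1`. -/
theorem stmt_9 [Fintype V] [DecidableEq V] (A : V → V → Prop)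
    (hloop : ∀ v : V, ¬ A v v) (htour : ∀ u v : V, u ≠ v → (A u v ↔ ¬ A v u))
    (hn : 3 ≤ Fintype.card V) (hu : ∃ u : V, inDeg A u = 0) :
    2 ≤ gammaOSO A ∧ gammaOSO A ≤ Nat.clog 2 (Fintype.card V - 1) + 1 := by
  have : Std.Trichotomous A :=
    ⟨fun v w hvw hwv => by_contra fun hne => hvw ((htour v w hne).2 hwv)⟩
  exact stmt_9_general A hn hu
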